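/- Let α ∈ (0,1) and let X = (X_1,…,X_n) be α-concentrated. Then DQ^VaR_α(X) ≤ 1, and if the X_i are integrable, also DQ^ES_α(X) ≤ 1. -/

import Mathlib

open MeasureTheory ProbabilityTheory Filter Set

namespace DQ

variable {Ω : Type*} [MeasurableSpace Ω]

/-- An atomless probability measure: every non-null measurable set has a measurable
subset of strictly smaller positive measure. -/
def Atomless (P : Measure Ω) : Prop :=
  ∀ A : Set Ω, MeasurableSet A → 0 < P A →
    ∃ B, MeasurableSet B ∧ B ⊆ A ∧ 0 < P B ∧ P B < P A

/-- Value-at-Risk at level `α` (small-`α` convention):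
`VaR_α(X) = inf {x | P(X ≤ x) ≥ 1 - α}`. -/
noncomputable def VaR (P : Measure Ω) (α : ℝ) (X : Ω → ℝ) : ℝ :=
  sInf {x : ℝ | 1 - α ≤ (P {ω | X ω ≤ x}).toReal}

/-- Expected Shortfall at level `α`: `ES_α(X) = (1/α) ∫_0^α VaR_β(X) dβ`. -/
noncomputable def ES (P : Measure Ω) (α : ℝ) (X : Ω → ℝ) : ℝ :=
  (1 / α) * ∫ β in Set.Ioo (0 : ℝ) α, VaR P β X

/-- `α* = inf {β ∈ (0,1) | VaR_β(∑ Xᵢ) ≤ ∑ VaR_α(Xᵢ)}`, with `inf ∅ = 1`. -/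
noncomputable def alphaStarVaR (P : Measure Ω) (α : ℝ) {n : ℕ} (X : Fin n → Ω → ℝ) : ℝ :=
  sInf ({β ∈ Set.Ioo (0 : ℝ) 1 |
    VaR P β (fun ω => ∑ i, X i ω) ≤ ∑ i, VaR P α (X i)} ∪ {1})

/-- Diversification quotient based on VaR: `DQ^VaR_α(X) = α*/α`. -/
noncomputable def DQVaR (P : Measure Ω) (α : ℝ) {n : ℕ} (X : Fin n → Ω → ℝ) : ℝ :=
  alphaStarVaR P α X / α

/-- `α* = inf {β ∈ (0,1) | ES_β(∑ Xᵢ) ≤ ∑ ES_α(Xᵢ)}`, with `inf ∅ = 1`. -/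
noncomputable def alphaStarES (P : Measure Ω) (α : ℝ) {n : ℕ} (X : Fin n → Ω → ℝ) : ℝ :=
  sInf ({β ∈ Set.Ioo (0 : ℝ) 1 |
    ES P β (fun ω => ∑ i, X i ω) ≤ ∑ i, ES P α (X i)} ∪ {1})

/-- Diversification quotient based on ES: `DQ^ES_α(X) = α*/α`. -/
noncomputable def DQES (P : Measure Ω) (α : ℝ) {n : ℕ} (X : Fin n → Ω → ℝ) : ℝ :=
  alphaStarES P α X / α

end DQ

namespace DQ

variable {Ω : Type*} [MeasurableSpace Ω]

/-- `A` is a tail event of `X`: `0 < P(A) < 1` and, off a null set,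
`X(ω) ≥ X(ω')` for all `ω ∈ A` and `ω' ∈ Aᶜ`. -/
def TailEvent (P : Measure Ω) (X : Ω → ℝ) (A : Set Ω) : Prop :=
  MeasurableSet A ∧ 0 < P A ∧ P A < 1 ∧
  ∃ N : Set Ω, P N = 0 ∧ ∀ ω ∈ A \ N, ∀ ω' ∈ Aᶜ \ N, X ω' ≤ X ω

/-- `(X₁,…,Xₙ)` is `α`-concentrated: the components share a common tail event of
probability `α`. -/
def Concentrated (P : Measure Ω) {n : ℕ} (X : Fin n → Ω → ℝ) (α : ℝ) : Prop :=
  ∃ A : Set Ω, P A = ENNReal.ofReal α ∧ ∀ i, TailEvent P (X i) A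

end DQ

/-!
A tail event `A` of `X` is nested, up to null sets, with every superlevel set `{x < X}`, and
`VaR_β(X) ≤ x` means `P(x < X) ≤ β`. If `P(A) = α`, nestedness puts `{VaR_α(X) < X}` inside `A`.
The sum exceeds `∑ VaR_α(Xᵢ)` only where some `Xᵢ` exceeds `VaR_α(Xᵢ)`, hence only inside the common
tail event, so `VaR_α(∑ Xᵢ) ≤ ∑ VaR_α(Xᵢ)`. Nestedness also shows that `β ↦ VaR_β(X)` on `(0, α)`
has the law of `X` on `A`, so `ES_α(X)` is the mean of `X` over `A`. A common tail event is a tail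
event of the sum, and means over a fixed event are additive, so `ES_α(∑ Xᵢ) = ∑ ES_α(Xᵢ)`.
-/

namespace DQ

lemma sInf_setOf_le_stieltjes_le_iff {R : Type*} [ConditionallyCompleteLinearOrder R]
    [TopologicalSpace R] [OrderTopology R] [DenselyOrdered R] [NoMaxOrder R]
    (f : StieltjesFunction R) {c : ℝ} (hc_le : ∃ y, c ≤ f y) (hlt_c : ∃ y, f y < c) (x : R) :
    sInf {y | c ≤ f y} ≤ x ↔ c ≤ f x := by
  constructor
  · intro hx
    rw [← f.iInf_Ioi_eq x]
    refine le_ciInf fun ⟨y, hxy⟩ => ?_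
    obtain ⟨z, hz, hzy⟩ := exists_lt_of_csInf_lt hc_le (hx.trans_lt hxy)
    exact le_trans hz (f.mono hzy.le)
  · obtain ⟨y, hy⟩ := hlt_c
    exact csInf_le ⟨y, fun z hz => (f.mono.reflect_lt (hy.trans_le hz)).le⟩

lemma measure_sdiff_of_nested {Ω : Type*} [MeasurableSpace Ω] {μ : Measure Ω} {s t : Set Ω}
    (hst : s ≤ᵐ[μ] t ∨ t ≤ᵐ[μ] s) (ht : NullMeasurableSet t μ) (ht_top : μ t ≠ ⊤) :
    μ (s \ t) = μ s - μ t := by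
  rcases hst with hst | hts
  · rw [ae_le_set.1 hst, tsub_eq_zero_of_le (measure_mono_ae hst)]
  · rw [measure_sdiff' s ht ht_top, measure_congr (union_ae_eq_left_iff_ae_subset.2 hts)]

lemma volume_Ici_inter_Ioo {a b c : ℝ} (hab : a ≤ b) :
    volume (Ici b ∩ Ioo a c) = ENNReal.ofReal (c - b) := by
  rw [measure_congr ((ae_eq_refl _).inter Ioo_ae_eq_Ico), ← Ici_inter_Iio, ← inter_assoc,
    Ici_inter_Ici, max_eq_left hab, Ici_inter_Iio, Real.volume_Ico]

section ValueAtRisk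

variable {Ω : Type*} [MeasurableSpace Ω] {P : Measure Ω} [IsProbabilityMeasure P] {X : Ω → ℝ}
  {α β : ℝ}

lemma VaR_eq_sInf_cdf (hX : AEMeasurable X P) (β : ℝ) :
    VaR P β X = sInf {x | 1 - β ≤ cdf (P.map X) x} := by
  have := Measure.isProbabilityMeasure_map hX
  simp only [cdf_eq_real, map_measureReal_apply_of_aemeasurable hX measurableSet_Iic]
  rfl

lemma cdf_map_eq_one_sub (hX : AEMeasurable X P) (x : ℝ) :
    cdf (P.map X) x = 1 - P.real {ω | x < X ω} := by
  have := Measure.isProbabilityMeasure_map hX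
  have hlt : NullMeasurableSet {ω | x < X ω} P := nullMeasurableSet_lt aemeasurable_const hX
  have hcompl : X ⁻¹' Iic x = {ω | x < X ω}ᶜ := by ext; simp
  rw [cdf_eq_real, map_measureReal_apply_of_aemeasurable hX measurableSet_Iic, hcompl,
    probReal_compl_eq_one_sub₀ hlt]

lemma VaR_le_iff (hX : AEMeasurable X P) (hβ : β ∈ Ioo (0 : ℝ) 1) (x : ℝ) :
    VaR P β X ≤ x ↔ P.real {ω | x < X ω} ≤ β := by
  have hc_le : ∃ y, 1 - β ≤ cdf (P.map X) y :=
    ((tendsto_cdf_atTop _).eventually_const_le (sub_lt_self 1 hβ.1)).exists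
  have hlt_c : ∃ y, cdf (P.map X) y < 1 - β :=
    ((tendsto_cdf_atBot _).eventually_lt_const (sub_pos.2 hβ.2)).exists
  rw [VaR_eq_sInf_cdf hX, sInf_setOf_le_stieltjes_le_iff _ hc_le hlt_c, cdf_map_eq_one_sub hX,
    sub_le_sub_iff_left]

lemma measureReal_VaR_lt_le (hX : AEMeasurable X P) (hβ : β ∈ Ioo (0 : ℝ) 1) :
    P.real {ω | VaR P β X < X ω} ≤ β :=
  (VaR_le_iff hX hβ _).1 le_rfl

lemma antitoneOn_VaR (hX : AEMeasurable X P) :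
    AntitoneOn (fun β => VaR P β X) (Ioo (0 : ℝ) 1) := fun _ hβ _ hγ hβγ =>
  (VaR_le_iff hX hγ _).2 ((measureReal_VaR_lt_le hX hβ).trans hβγ)

lemma aemeasurable_VaR (hX : AEMeasurable X P) (hα : α ≤ 1) :
    AEMeasurable (fun β => VaR P β X) (volume.restrict (Ioo (0 : ℝ) α)) :=
  aemeasurable_restrict_of_antitoneOn measurableSet_Ioo
    ((antitoneOn_VaR hX).mono (Ioo_subset_Ioo_right hα))

lemma volume_setOf_VaR_le (hX : AEMeasurable X P) (hα : α ≤ 1) (x : ℝ) :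
    volume ({β | VaR P β X ≤ x} ∩ Ioo (0 : ℝ) α) =
      ENNReal.ofReal (α - P.real {ω | x < X ω}) := by
  have hset : {β | VaR P β X ≤ x} ∩ Ioo (0 : ℝ) α = Ici (P.real {ω | x < X ω}) ∩ Ioo 0 α :=
    Set.ext fun β => and_congr_left fun hβ => VaR_le_iff hX (Ioo_subset_Ioo_right hα hβ) x
  rw [hset, volume_Ici_inter_Ioo measureReal_nonneg]

lemma VaR_const (hβ : β ∈ Ioo (0 : ℝ) 1) (c : ℝ) : VaR P β (fun _ => c) = c := by
  refine eq_of_forall_ge_iff fun x => ?_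
  rw [VaR_le_iff aemeasurable_const hβ]
  rcases le_or_gt c x with hcx | hxc
  · simp [hcx, hcx.not_gt, hβ.1.le]
  · simp [hxc, hxc.not_ge, hβ.2]

lemma ES_const (hα : α ∈ Ioo (0 : ℝ) 1) (c : ℝ) : ES P α (fun _ => c) = c := by
  rw [ES, setIntegral_congr_fun measurableSet_Ioo fun β hβ =>
    VaR_const (Ioo_subset_Ioo_right hα.2.le hβ) c]
  simp [hα.1.le, hα.1.ne']

end ValueAtRisk

namespace TailEvent

variable {Ω : Type*} [MeasurableSpace Ω] {P : Measure Ω} {X : Ω → ℝ} {A : Set Ω}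

lemma nested_superlevel (hA : TailEvent P X A) (x : ℝ) :
    A ≤ᵐ[P] {ω | x < X ω} ∨ {ω | x < X ω} ≤ᵐ[P] A := by
  obtain ⟨-, -, -, N, hN, hAN⟩ := hA
  have hN_ae : ∀ᵐ ω ∂P, ω ∉ N := measure_eq_zero_iff_ae_notMem.1 hN
  by_cases hle : ∃ ω ∈ A \ N, X ω ≤ x
  · obtain ⟨ω, hω, hωx⟩ := hle
    right
    filter_upwards [hN_ae] with ω' hω'N hxω'
    by_contra hω'A
    exact hxω'.not_ge ((hAN ω hω ω' ⟨hω'A, hω'N⟩).trans hωx)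
  · push Not at hle
    left
    filter_upwards [hN_ae] with ω hωN hωA using hle ω ⟨hωA, hωN⟩

lemma sum {ι : Type*} [Fintype ι] [Nonempty ι] {X : ι → Ω → ℝ}
    (hA : ∀ i, TailEvent P (X i) A) : TailEvent P (fun ω => ∑ i, X i ω) A := by
  obtain ⟨hAm, hA_pos, hA_lt, -⟩ := hA (Classical.arbitrary ι)
  choose N hN hAN using fun i => (hA i).2.2.2
  refine ⟨hAm, hA_pos, hA_lt, ⋃ i, N i, measure_iUnion_null hN, fun ω hω ω' hω' => ?_⟩
  have hsub (i : ι) : N i ⊆ ⋃ i, N i := subset_iUnion N i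
  exact Finset.sum_le_sum fun i _ =>
    hAN i ω ⟨hω.1, notMem_subset (hsub i) hω.2⟩ ω' ⟨hω'.1, notMem_subset (hsub i) hω'.2⟩

variable [IsProbabilityMeasure P]

lemma measureReal_mem_Ioo (hA : TailEvent P X A) : P.real A ∈ Ioo (0 : ℝ) 1 := by
  refine ⟨ENNReal.toReal_pos hA.2.1.ne' (measure_ne_top P A), ?_⟩
  exact ENNReal.toReal_lt_of_lt_ofReal (by simpa using hA.2.2.1)

lemma VaR_lt_ae_le (hX : AEMeasurable X P) (hA : TailEvent P X A) :
    {ω | VaR P (P.real A) X < X ω} ≤ᵐ[P] A := by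
  rcases hA.nested_superlevel (VaR P (P.real A) X) with hle | hge
  · have hmeas : P {ω | VaR P (P.real A) X < X ω} ≤ P A :=
      (ENNReal.toReal_le_toReal (measure_ne_top P _) (measure_ne_top P _)).1
        (measureReal_VaR_lt_le hX hA.measureReal_mem_Ioo)
    exact (ae_eq_of_ae_subset_of_measure_ge hle hmeas hA.1.nullMeasurableSet
      (measure_ne_top P _)).symm.le
  · exact hge

lemma map_restrict_eq_map_VaR (hX : AEMeasurable X P) (hA : TailEvent P X A) :
    (P.restrict A).map X =
      (volume.restrict (Ioo (0 : ℝ) (P.real A))).map (fun β => VaR P β X) := by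
  refine Measure.ext_of_Iic _ _ fun x => ?_
  have hlt : NullMeasurableSet {ω | x < X ω} P := nullMeasurableSet_lt aemeasurable_const hX
  have hsdiff : X ⁻¹' Iic x ∩ A = A \ {ω | x < X ω} := by
    ext
    simp [and_comm]
  calc
    (P.restrict A).map X (Iic x)
      = P (A \ {ω | x < X ω}) := by
        rw [Measure.map_apply_of_aemeasurable hX.restrict measurableSet_Iic,
          Measure.restrict_apply' hA.1, hsdiff]
    _ = P A - P {ω | x < X ω} :=
        measure_sdiff_of_nested (hA.nested_superlevel x) hlt (measure_ne_top P _)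
    _ = ENNReal.ofReal (P.real A - P.real {ω | x < X ω}) := by
        rw [ENNReal.ofReal_sub _ measureReal_nonneg, ofReal_measureReal, ofReal_measureReal]
    _ = volume ({β | VaR P β X ≤ x} ∩ Ioo (0 : ℝ) (P.real A)) :=
        (volume_setOf_VaR_le hX measureReal_le_one x).symm
    _ = (volume.restrict (Ioo (0 : ℝ) (P.real A))).map (fun β => VaR P β X) (Iic x) := by
        rw [Measure.map_apply_of_aemeasurable (aemeasurable_VaR hX measureReal_le_one)
          measurableSet_Iic, Measure.restrict_apply' measurableSet_Ioo]
        rfl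

lemma ES_eq_setAverage (hX : AEMeasurable X P) (hA : TailEvent P X A) :
    ES P (P.real A) X = ⨍ ω in A, X ω ∂P := by
  have hVaR := aemeasurable_VaR hX (measureReal_le_one (μ := P) (s := A))
  have hintegral := calc
    ∫ β in Ioo (0 : ℝ) (P.real A), VaR P β X
      = ∫ y, y ∂(volume.restrict (Ioo (0 : ℝ) (P.real A))).map (fun β => VaR P β X) :=
        (integral_map hVaR aestronglyMeasurable_id).symm
    _ = ∫ y, y ∂(P.restrict A).map X := by rw [hA.map_restrict_eq_map_VaR hX]
    _ = ∫ ω in A, X ω ∂P := integral_map hX.restrict aestronglyMeasurable_id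
  rw [ES, hintegral, setAverage_eq, one_div, smul_eq_mul]

end TailEvent

section CommonTailEvent

variable {Ω : Type*} [MeasurableSpace Ω] {P : Measure Ω} [IsProbabilityMeasure P] {ι : Type*}
  [Fintype ι] {X : ι → Ω → ℝ} {A : Set Ω}

lemma VaR_sum_le_sum_VaR (hX : ∀ i, AEMeasurable (X i) P) (hPA : P.real A ∈ Ioo (0 : ℝ) 1)
    (hA : ∀ i, TailEvent P (X i) A) :
    VaR P (P.real A) (fun ω => ∑ i, X i ω) ≤ ∑ i, VaR P (P.real A) (X i) := by
  rw [VaR_le_iff (Finset.aemeasurable_fun_sum _ fun i _ => hX i) hPA]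
  have hsubset : {ω | ∑ i, VaR P (P.real A) (X i) < ∑ i, X i ω} ≤ᵐ[P] A := by
    filter_upwards [ae_all_iff.2 fun i => (hA i).VaR_lt_ae_le (hX i)] with ω hω hlt
    obtain ⟨i, -, hi⟩ := Finset.exists_lt_of_sum_lt hlt
    exact hω i hi
  exact ENNReal.toReal_mono (measure_ne_top P A) (measure_mono_ae hsubset)

lemma ES_sum_eq_sum_ES (hX : ∀ i, AEMeasurable (X i) P) (hPA : P.real A ∈ Ioo (0 : ℝ) 1)
    (hA : ∀ i, TailEvent P (X i) A) (hint : ∀ i, IntegrableOn (X i) A P) :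
    ES P (P.real A) (fun ω => ∑ i, X i ω) = ∑ i, ES P (P.real A) (X i) := by
  cases isEmpty_or_nonempty ι
  · simpa using ES_const hPA 0
  · rw [(TailEvent.sum hA).ES_eq_setAverage (Finset.aemeasurable_fun_sum _ fun i _ => hX i),
      Finset.sum_congr rfl fun i _ => (hA i).ES_eq_setAverage (hX i)]
    simp only [setAverage_eq, ← Finset.smul_sum]
    rw [integral_finsetSum _ fun i _ => hint i]

end CommonTailEvent

section DiversificationQuotient

variable {Ω : Type*} [MeasurableSpace Ω] {P : Measure Ω} {α : ℝ} {n : ℕ} {X : Fin n → Ω → ℝ}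

lemma sInf_sep_Ioo_union_one_le {p : ℝ → Prop} (hα : α ∈ Ioo (0 : ℝ) 1) (hp : p α) :
    sInf ({β ∈ Ioo (0 : ℝ) 1 | p β} ∪ {1}) ≤ α := by
  refine csInf_le ⟨0, ?_⟩ (Or.inl ⟨hα, hp⟩)
  rintro β (hβ | rfl)
  · exact hβ.1.1.le
  · exact zero_le_one

lemma DQVaR_le_one_of_VaR_sum_le (hα : α ∈ Ioo (0 : ℝ) 1)
    (hsum : VaR P α (fun ω => ∑ i, X i ω) ≤ ∑ i, VaR P α (X i)) : DQVaR P α X ≤ 1 :=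
  (div_le_one hα.1).2 (sInf_sep_Ioo_union_one_le hα hsum)

lemma DQES_le_one_of_ES_sum_le (hα : α ∈ Ioo (0 : ℝ) 1)
    (hsum : ES P α (fun ω => ∑ i, X i ω) ≤ ∑ i, ES P α (X i)) : DQES P α X ≤ 1 :=
  (div_le_one hα.1).2 (sInf_sep_Ioo_union_one_le hα hsum)

end DiversificationQuotient

end DQ

open DQ in
theorem stmt6_general {Ω : Type*} [MeasurableSpace Ω] (P : Measure Ω) [IsProbabilityMeasure P]
    (n : ℕ) (X : Fin n → Ω → ℝ) (hX : ∀ i, AEMeasurable (X i) P)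
    (α : ℝ) (hα : α ∈ Set.Ioo (0 : ℝ) 1) (hconc : Concentrated P X α) :
    DQVaR P α X ≤ 1 ∧ ((∀ i, Integrable (X i) P) → DQES P α X ≤ 1) := by
  obtain ⟨A, hPA, hA⟩ := hconc
  obtain rfl : P.real A = α := by rw [measureReal_def, hPA, ENNReal.toReal_ofReal hα.1.le]
  exact ⟨DQVaR_le_one_of_VaR_sum_le hα (VaR_sum_le_sum_VaR hX hα hA), fun hint =>
    DQES_le_one_of_ES_sum_le hα (ES_sum_eq_sum_ES hX hα hA fun i => (hint i).integrableOn).le⟩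

open DQ in
/-- If X is α-concentrated, then DQ^VaR_α(X) ≤ 1, and if the Xᵢ are integrable,
also DQ^ES_α(X) ≤ 1. -/
theorem stmt6 {Ω : Type*} [MeasurableSpace Ω] (P : Measure Ω) [IsProbabilityMeasure P]
    (hP : Atomless P) (n : ℕ) (X : Fin n → Ω → ℝ) (hX : ∀ i, Measurable (X i))
    (α : ℝ) (hα : α ∈ Set.Ioo (0 : ℝ) 1) (hconc : Concentrated P X α) :
    DQVaR P α X ≤ 1 ∧ ((∀ i, Integrable (X i) P) → DQES P α X ≤ 1) :=
  stmt6_general P n X (fun i => (hX i).aemeasurable) α hα hconc
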